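/- Assume at least one label equals +1, at least one label equals −1, and the data are linearly separable. For each τ > 0 let (β̂(τ), β̂₀(τ)) be the unique maximizer of M_τ(β,β₀) := min_{1≤i≤n} ỹ_i(⟨x_i,β⟩+β₀) over {β : ‖β‖₂ ≤ 1} × ℝ, and let κ̂(τ) be the optimal value. Then for every τ > 0: β̂(τ) = β̂(1), β̂₀(τ) = β̂₀(1) + ((τ−1)/(τ+1))·κ̂(1), and κ̂(τ) = (2/(τ+1))·κ̂(1). -/

import Mathlib

open scoped RealInnerProductSpace

/-! Call `k` a `τ`-margin of `(β, b)` if `τ k ≤ f i β + b` at the positive labels and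
`k ≤ -(f i β + b)` at the negative ones. The shift `b ↦ b + (τ - σ) / (τ + 1) * k` together with
the scaling `k ↦ (σ + 1) / (τ + 1) * k` turns `σ`-margins into `τ`-margins, with inverse obtained by
exchanging `σ` and `τ`, so it carries maximizers to maximizers. It remains to see that maximizers
are unique. Margins are positively homogeneous and superadditive, so the optimal value `κ` satisfies
`k ≤ κ * ‖β‖` for every margin `k` of `(β, b)`. Separability makes `κ` positive;
then adding two maximizers gives `2 κ ≤ κ * ‖β + β'‖`, and `β = β'` by strict convexity of the norm.
For a fixed `β`, two different optimal offsets would leave room to enlarge the margin at an offset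
in between. -/

section HasMargin

variable {ι E : Type*} [AddCommGroup E] [Module ℝ E] {f : ι → Module.Dual ℝ E}
  {y : ι → ℝ} {σ τ : ℝ} {β β' : E} {b b' k k' : ℝ}

/-- The affine classifier `f i β + b` has rebalanced margin at least `k` on the data with features
`f i` and labels `y i`. The feature vectors of the paper are encoded as the functionals `⟪x i, ·⟫`,
and the factor `1 / τ` at the positive labels is moved to the side of `k`, so that the notion
makes sense for `τ ≤ 0` as well. -/
def HasMargin (f : ι → Module.Dual ℝ E) (y : ι → ℝ) (τ : ℝ) (β : E) (b k : ℝ) : Prop :=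
  (∀ i, y i = 1 → τ * k ≤ f i β + b) ∧ ∀ i, y i = -1 → k ≤ -(f i β + b)

namespace HasMargin

lemma zero : HasMargin f y τ 0 0 0 := by
  simp [HasMargin]

lemma add (h : HasMargin f y τ β b k) (h' : HasMargin f y τ β' b' k') :
    HasMargin f y τ (β + β') (b + b') (k + k') := by
  refine ⟨fun i hi => ?_, fun i hi => ?_⟩ <;> rw [map_add]
  · linarith [h.1 i hi, h'.1 i hi]
  · linarith [h.2 i hi, h'.2 i hi]

lemma smul (h : HasMargin f y τ β b k) {s : ℝ} (hs : 0 ≤ s) :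
    HasMargin f y τ (s • β) (s * b) (s * k) := by
  refine ⟨fun i hi => ?_, fun i hi => ?_⟩ <;> rw [map_smul, smul_eq_mul]
  · linarith [mul_le_mul_of_nonneg_left (h.1 i hi) hs]
  · linarith [mul_le_mul_of_nonneg_left (h.2 i hi) hs]

lemma rebalance (h : HasMargin f y σ β b k) (hτ : τ + 1 ≠ 0) :
    HasMargin f y τ β (b + (τ - σ) / (τ + 1) * k) ((σ + 1) / (τ + 1) * k) := by
  have hpos : τ * ((σ + 1) / (τ + 1) * k) = σ * k + (τ - σ) / (τ + 1) * k := by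
    field_simp
    ring
  have hneg : (σ + 1) / (τ + 1) * k = k - (τ - σ) / (τ + 1) * k := by
    field_simp
    ring
  refine ⟨fun i hi => ?_, fun i hi => ?_⟩
  · linarith [h.1 i hi]
  · linarith [h.2 i hi]

-- If `b ≤ b'`, then `b` controls the positive labels and `b'` the negative ones; the new offset
-- divides the slack `b' - b` between the two classes in the ratio `τ : 1`.
lemma increase_of_offsets (h : HasMargin f y τ β b k) (h' : HasMargin f y τ β b' k)
    (hτ : τ + 1 ≠ 0) :
    HasMargin f y τ β (b + τ * ((b' - b) / (τ + 1))) (k + (b' - b) / (τ + 1)) := by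
  have hsplit : τ * ((b' - b) / (τ + 1)) + (b' - b) / (τ + 1) = b' - b := by
    field_simp
  refine ⟨fun i hi => ?_, fun i hi => ?_⟩
  · linarith [h.1 i hi]
  · linarith [h'.2 i hi]

end HasMargin

open Filter Topology in
lemma exists_pos_hasMargin_of_separable [Finite ι] (τ : ℝ)
    (hsep : ∀ i, 0 < y i * (f i β + b)) : ∃ k, 0 < k ∧ HasMargin f y τ β b k := by
  have hpos : ∀ᶠ k in 𝓝[>] (0 : ℝ), ∀ i, y i = 1 → τ * k ≤ f i β + b := by
    refine eventually_all.2 fun i => eventually_imp_distrib_left.2 fun hi => ?_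
    have hlim : Tendsto (τ * ·) (𝓝[>] (0 : ℝ)) (𝓝 0) :=
      ((continuous_const_mul τ).tendsto' 0 0 (mul_zero τ)).mono_left nhdsWithin_le_nhds
    exact hlim.eventually_le_const (by simpa [hi] using hsep i)
  have hneg : ∀ᶠ k in 𝓝[>] (0 : ℝ), ∀ i, y i = -1 → k ≤ -(f i β + b) := by
    refine eventually_all.2 fun i => eventually_imp_distrib_left.2 fun hi => ?_
    have hlim : Tendsto id (𝓝[>] (0 : ℝ)) (𝓝 0) := nhdsWithin_le_nhds
    exact hlim.eventually_le_const (by simpa only [hi, neg_one_mul] using hsep i)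
  exact (eventually_mem_nhdsWithin.and (hpos.and hneg)).exists

lemma hasMargin_iff_le_inf' [Fintype ι] (hne : (Finset.univ : Finset ι).Nonempty)
    (hy : ∀ i, y i = 1 ∨ y i = -1) (hτ : 0 < τ) {w : ι → ℝ}
    (hpos : ∀ i, y i = 1 → w i = 1 / τ) (hneg : ∀ i, y i = -1 → w i = -1) :
    HasMargin f y τ β b k ↔ k ≤ Finset.univ.inf' hne fun i => w i * (f i β + b) := by
  have hpos_iff {i : ι} (hi : y i = 1) : k ≤ w i * (f i β + b) ↔ τ * k ≤ f i β + b := by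
    rw [hpos i hi, one_div, le_inv_mul_iff₀ hτ]
  have hneg_iff {i : ι} (hi : y i = -1) : k ≤ w i * (f i β + b) ↔ k ≤ -(f i β + b) := by
    rw [hneg i hi, neg_one_mul]
  simp only [Finset.le_inf'_iff, Finset.mem_univ, true_imp_iff]
  constructor
  · intro h i
    rcases hy i with hi | hi
    · exact (hpos_iff hi).2 (h.1 i hi)
    · exact (hneg_iff hi).2 (h.2 i hi)
  · exact fun h => ⟨fun i hi => (hpos_iff hi).1 (h i), fun i hi => (hneg_iff hi).1 (h i)⟩

end HasMargin

section IsMaxMargin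

variable {ι E : Type*} [NormedAddCommGroup E] [NormedSpace ℝ E] {f : ι → Module.Dual ℝ E}
  {y : ι → ℝ} {σ τ : ℝ} {β β' : E} {b b' k κ κ' : ℝ}

/-- The pair `(β, b)` solves the `τ`-rebalanced maximum margin problem over the closed unit ball,
and `κ` is the optimal value. -/
structure IsMaxMargin (f : ι → Module.Dual ℝ E) (y : ι → ℝ) (τ : ℝ) (β : E) (b κ : ℝ) :
    Prop where
  norm_le_one : ‖β‖ ≤ 1
  hasMargin : HasMargin f y τ β b κ
  le_of_hasMargin : ∀ {β' : E} {b' k : ℝ}, ‖β'‖ ≤ 1 → HasMargin f y τ β' b' k → k ≤ κ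

lemma isMaxMargin_of_inf' [Fintype ι] (hne : (Finset.univ : Finset ι).Nonempty)
    (hy : ∀ i, y i = 1 ∨ y i = -1) (hτ : 0 < τ) {w : ι → ℝ}
    (hpos : ∀ i, y i = 1 → w i = 1 / τ) (hneg : ∀ i, y i = -1 → w i = -1)
    (hβ : ‖β‖ ≤ 1) (hκ : κ = Finset.univ.inf' hne fun i => w i * (f i β + b))
    (hmax : ∀ q : E × ℝ, ‖q.1‖ ≤ 1 →
      (Finset.univ.inf' hne fun i => w i * (f i q.1 + q.2)) ≤ κ) :
    IsMaxMargin f y τ β b κ where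
  norm_le_one := hβ
  hasMargin := (hasMargin_iff_le_inf' hne hy hτ hpos hneg).2 hκ.le
  le_of_hasMargin hβ' h :=
    ((hasMargin_iff_le_inf' hne hy hτ hpos hneg).1 h).trans (hmax (_, _) hβ')

namespace IsMaxMargin

lemma value_unique (h : IsMaxMargin f y τ β b κ) (h' : IsMaxMargin f y τ β' b' κ') : κ = κ' :=
  le_antisymm (h'.le_of_hasMargin h.norm_le_one h.hasMargin)
    (h.le_of_hasMargin h'.norm_le_one h'.hasMargin)

lemma rebalance (h : IsMaxMargin f y σ β b κ) (hσ : -1 < σ) (hτ : -1 < τ) :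
    IsMaxMargin f y τ β (b + (τ - σ) / (τ + 1) * κ) ((σ + 1) / (τ + 1) * κ) where
  norm_le_one := h.norm_le_one
  hasMargin := h.hasMargin.rebalance (by linarith)
  le_of_hasMargin {β' b' k} hβ' h' := by
    have hσ' : 0 < σ + 1 := by linarith
    have hτ' : 0 < τ + 1 := by linarith
    have hback : (τ + 1) / (σ + 1) * k ≤ κ := h.le_of_hasMargin hβ' (h'.rebalance hσ'.ne')
    rwa [← inv_div, inv_mul_le_iff₀ (by positivity)] at hback

lemma nonneg (h : IsMaxMargin f y τ β b κ) : 0 ≤ κ :=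
  h.le_of_hasMargin (by simp) HasMargin.zero

lemma le_mul_norm (h : IsMaxMargin f y τ β b κ) (h' : HasMargin f y τ β' b' k) :
    k ≤ κ * ‖β'‖ := by
  have hscale {s : ℝ} (hs : 0 ≤ s) (hsβ' : s * ‖β'‖ ≤ 1) : s * k ≤ κ :=
    h.le_of_hasMargin (by rwa [norm_smul, Real.norm_of_nonneg hs]) (h'.smul hs)
  rcases (norm_nonneg β').eq_or_lt' with hβ' | hβ'
  · by_contra! hk
    rw [hβ', mul_zero] at hk
    have hκ : (κ + 1) / k * k ≤ κ :=
      hscale (div_nonneg (by linarith [h.nonneg]) hk.le) (by simp [hβ'])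
    rw [div_mul_cancel₀ _ hk.ne'] at hκ
    linarith
  · rw [mul_comm, ← inv_mul_le_iff₀ hβ']
    exact hscale (inv_nonneg.2 hβ'.le) (inv_mul_cancel₀ hβ'.ne').le

lemma pos_of_hasMargin (h : IsMaxMargin f y τ β b κ) (h' : HasMargin f y τ β' b' k)
    (hk : 0 < k) : 0 < κ :=
  pos_of_mul_pos_left (hk.trans_le (h.le_mul_norm h')) (norm_nonneg β')

lemma pos_of_separable [Finite ι] (h : IsMaxMargin f y τ β b κ)
    (hsep : ∃ (β : E) (b : ℝ), ∀ i, 0 < y i * (f i β + b)) : 0 < κ := by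
  obtain ⟨β', b', hsep⟩ := hsep
  obtain ⟨k, hk, hmargin⟩ := exists_pos_hasMargin_of_separable τ hsep
  exact h.pos_of_hasMargin hmargin hk

lemma norm_eq_one (h : IsMaxMargin f y τ β b κ) (hκ : 0 < κ) : ‖β‖ = 1 :=
  le_antisymm h.norm_le_one <| (le_mul_iff_one_le_right hκ).1 (h.le_mul_norm h.hasMargin)

lemma direction_unique [StrictConvexSpace ℝ E] (h : IsMaxMargin f y τ β b κ)
    (h' : IsMaxMargin f y τ β' b' κ) (hκ : 0 < κ) : β = β' := by
  have hβ : ‖β‖ = 1 := h.norm_eq_one hκ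
  have hβ' : ‖β'‖ = 1 := h'.norm_eq_one hκ
  have hsum : 2 ≤ ‖β + β'‖ := by
    have hmargin : κ + κ ≤ κ * ‖β + β'‖ := h.le_mul_norm (h.hasMargin.add h'.hasMargin)
    refine le_of_mul_le_mul_left ?_ hκ
    linarith
  refine eq_of_norm_eq_of_norm_add_eq (hβ.trans hβ'.symm) (le_antisymm (norm_add_le β β') ?_)
  linarith

lemma offset_le (h : IsMaxMargin f y τ β b κ) (h' : HasMargin f y τ β b' κ) (hτ : -1 < τ) :
    b' ≤ b := by
  have hτ' : 0 < τ + 1 := by linarith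
  have hgain : κ + (b' - b) / (τ + 1) ≤ κ :=
    h.le_of_hasMargin h.norm_le_one (h.hasMargin.increase_of_offsets h' hτ'.ne')
  rwa [add_le_iff_nonpos_right, div_le_iff₀ hτ', zero_mul, sub_nonpos] at hgain

lemma unique [StrictConvexSpace ℝ E] (h : IsMaxMargin f y τ β b κ)
    (h' : IsMaxMargin f y τ β' b' κ') (hτ : -1 < τ) (hκ : 0 < κ) :
    β = β' ∧ b = b' ∧ κ = κ' := by
  obtain rfl := h.value_unique h'
  obtain rfl := h.direction_unique h' hκ
  exact ⟨rfl, le_antisymm (h'.offset_le h.hasMargin hτ) (h.offset_le h'.hasMargin hτ), rfl⟩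

end IsMaxMargin

theorem stmt_1_general [StrictConvexSpace ℝ E] (h : IsMaxMargin f y σ β b κ)
    (h' : IsMaxMargin f y τ β' b' κ') (hσ : -1 < σ) (hτ : -1 < τ) (hκ : 0 < κ) :
    β' = β ∧ b' = b + (τ - σ) / (τ + 1) * κ ∧ κ' = (σ + 1) / (τ + 1) * κ := by
  have hratio : 0 < (σ + 1) / (τ + 1) := div_pos (by linarith) (by linarith)
  obtain ⟨hβ, hb, hκ'⟩ := (h.rebalance hσ hτ).unique h' hτ (mul_pos hratio hκ)
  exact ⟨hβ.symm, hb.symm, hκ'.symm⟩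

end IsMaxMargin

/-- Relation between the margin-rebalanced SVM solution at
parameter `τ` and the solution at `τ = 1`. -/
theorem stmt_1
    (n d : ℕ) (hn : 1 ≤ n) (hd : 1 ≤ d)
    (x : Fin n → EuclideanSpace ℝ (Fin d))
    (y : Fin n → ℝ) (hy : ∀ i, y i = 1 ∨ y i = -1)
    (hplus : ∃ i, y i = 1) (hminus : ∃ i, y i = -1)
    (hsep : ∃ (β : EuclideanSpace ℝ (Fin d)) (β₀ : ℝ),
      ∀ i, 0 < y i * (⟪x i, β⟫ + β₀))
    (ytil : ℝ → Fin n → ℝ)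
    (hytil1 : ∀ τ i, y i = 1 → ytil τ i = 1 / τ)
    (hytil2 : ∀ τ i, y i = -1 → ytil τ i = -1)
    (M : ℝ → EuclideanSpace ℝ (Fin d) → ℝ → ℝ)
    (hM : ∀ τ β β₀, M τ β β₀ =
      (Finset.univ : Finset (Fin n)).inf' ⟨hplus.choose, Finset.mem_univ hplus.choose⟩
        fun i => ytil τ i * (⟪x i, β⟫ + β₀))
    (βhat : ℝ → EuclideanSpace ℝ (Fin d)) (βhat₀ : ℝ → ℝ) (κhat : ℝ → ℝ)
    (hnorm : ∀ τ, 0 < τ → ‖βhat τ‖ ≤ 1)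
    (hopt : ∀ τ, 0 < τ → ∀ q : EuclideanSpace ℝ (Fin d) × ℝ,
      ‖q.1‖ ≤ 1 → M τ q.1 q.2 ≤ M τ (βhat τ) (βhat₀ τ))
    (hκ : ∀ τ, 0 < τ → κhat τ = M τ (βhat τ) (βhat₀ τ)) :
    ∀ τ : ℝ, 0 < τ →
      βhat τ = βhat 1 ∧
      βhat₀ τ = βhat₀ 1 + (τ - 1) / (τ + 1) * κhat 1 ∧
      κhat τ = 2 / (τ + 1) * κhat 1 := by
  intro τ hτ
  have hmax {τ : ℝ} (hτ : 0 < τ) : IsMaxMargin (fun i => innerₗ _ (x i)) y τ (βhat τ) (βhat₀ τ)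
      (κhat τ) :=
    isMaxMargin_of_inf' _ hy hτ (hytil1 τ) (hytil2 τ) (hnorm τ hτ) ((hκ τ hτ).trans (hM _ _ _))
      fun q hq => (hM τ q.1 q.2).ge.trans ((hopt τ hτ q hq).trans (hκ τ hτ).ge)
  rw [← one_add_one_eq_two]
  exact stmt_1_general (hmax one_pos) (hmax hτ) (by norm_num) (by linarith)
    ((hmax one_pos).pos_of_separable hsep)
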